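/- Fix ρ ∈ (0,1) and ν ∈ ℝ. For the quantum walk driven by the matrix V alone (without the flip U_f), for every t = 0,1,2,… and every x ∈ ℤ, P(X_t = x) = ‖ ∫_{−π}^{π} e^{ikx} ( R(−k/2) · [[ρ₀, −ρ], [ρ, ρ₀]] )^{2t} · R(−ν/2) · (α, β)ᵀ dk/(2π) ‖², where R(φ) = [[e^{iφ}, 0], [0, e^{−iφ}]]. -/

import Mathlib

open Real

noncomputable section

/-- `ρ₀ = √(1-ρ²)`. -/
def rz (ρ : ℝ) : ℝ := Real.sqrt (1 - ρ ^ 2)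

/-- `α₀ = ρ e^{iν}`. -/
def az (ρ ν : ℝ) : ℂ := (ρ : ℂ) * Complex.exp (Complex.I * (ν : ℂ))

/-- `C₋`. -/
def Cm (ρ ν : ℝ) : Matrix (Fin 2) (Fin 2) ℂ :=
  !![0, 0; ((rz ρ : ℝ) : ℂ) * (starRingEnd ℂ) (az ρ ν), (((rz ρ) ^ 2 : ℝ) : ℂ)]

/-- `C₀`. -/
def C0 (ρ ν : ℝ) : Matrix (Fin 2) (Fin 2) ℂ :=
  !![-((ρ ^ 2 : ℝ) : ℂ), -(az ρ ν) * ((rz ρ : ℝ) : ℂ);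
      ((rz ρ : ℝ) : ℂ) * (starRingEnd ℂ) (az ρ ν), -((ρ ^ 2 : ℝ) : ℂ)]

/-- `C₊`. -/
def Cp (ρ ν : ℝ) : Matrix (Fin 2) (Fin 2) ℂ :=
  !![(((rz ρ) ^ 2 : ℝ) : ℂ), -(az ρ ν) * ((rz ρ : ℝ) : ℂ); 0, 0]

/-- The quantum walk driven by the matrix `V` alone. -/
def cwalk (ρ ν : ℝ) (α β : ℂ) : ℕ → ℤ → Fin 2 → ℂ
  | 0, x => if x = 0 then ![α, β] else 0
  | t + 1, x =>
      (Cm ρ ν).mulVec (cwalk ρ ν α β t (x + 1)) + (C0 ρ ν).mulVec (cwalk ρ ν α β t x)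
        + (Cp ρ ν).mulVec (cwalk ρ ν α β t (x - 1))

/-- `P(X_t = x) = ‖Ψ_t(x)‖²`. -/
def cprob (ρ ν : ℝ) (α β : ℂ) (t : ℕ) (x : ℤ) : ℝ :=
  norm (cwalk ρ ν α β t x 0) ^ 2 + norm (cwalk ρ ν α β t x 1) ^ 2

/-- `R(φ) = diag(e^{iφ}, e^{−iφ})`. -/
def Rmat (φ : ℝ) : Matrix (Fin 2) (Fin 2) ℂ :=
  !![Complex.exp (Complex.I * (φ : ℂ)), 0; 0, Complex.exp (-(Complex.I * (φ : ℂ)))]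

/-- The coin matrix `[[ρ₀, −ρ], [ρ, ρ₀]]`. -/
def Cmat (ρ : ℝ) : Matrix (Fin 2) (Fin 2) ℂ :=
  !![((rz ρ : ℝ) : ℂ), -((ρ : ℝ) : ℂ); ((ρ : ℝ) : ℂ), ((rz ρ : ℝ) : ℂ)]

/-!
A translation-invariant walk is a convolution operator on `ℤ`, so the Fourier transform turns one
step into multiplication by a matrix-valued symbol, and Fourier inversion gives
`Ψ_t(x) = (2π)⁻¹ ∫ e^{ikx} S(k)^t Ψ_0(0) dk`. For the walk driven by `V`, conjugation by the diagonal
unitary `R(-ν/2)` removes the phase `ν` from the symbol and turns it into the square of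
`R(-k/2) · [[ρ₀, -ρ], [ρ, ρ₀]]`. Being diagonal and unitary, `R(-ν/2)` does not change the modulus of
either component of `Ψ_t(x)`.
-/

open Matrix MeasureTheory

section InverseFourier

variable {E F : Type*} [NormedAddCommGroup E] [NormedSpace ℂ E]
  [NormedAddCommGroup F] [NormedSpace ℂ F]

/-- The inverse Fourier transform from functions of the quasi-momentum `k ∈ (-π, π]` to functions
on the lattice `ℤ`; it is the Fourier coefficient of index `-x`, the sign being the one for which a
walk step by `d` has the phase `e^{-ikd}`. -/
def latticeFourierInv (f : ℝ → E) (x : ℤ) : E :=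
  (2 * π : ℂ)⁻¹ • ∫ k in (-π)..π, Complex.exp (Complex.I * k * x) • f k

lemma integral_exp_I_mul_intCast (x : ℤ) :
    ∫ k in (-π)..π, Complex.exp (Complex.I * k * x) = if x = 0 then (2 * π : ℂ) else 0 := by
  split_ifs with hx
  · simp [hx, two_mul]
  · have hIx : Complex.I * (x : ℂ) ≠ 0 := mul_ne_zero Complex.I_ne_zero (Int.cast_ne_zero.mpr hx)
    have hperiod : Complex.exp (Complex.I * x * π) = Complex.exp (Complex.I * x * (-π : ℝ)) :=
      Complex.exp_eq_exp_iff_exists_int.mpr ⟨x, by push_cast; ring⟩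
    simp_rw [mul_right_comm Complex.I _ (x : ℂ)]
    rw [integral_exp_mul_complex hIx, hperiod, sub_self, zero_div]

lemma latticeFourierInv_const [CompleteSpace E] (c : E) (x : ℤ) :
    latticeFourierInv (fun _ => c) x = if x = 0 then c else 0 := by
  have hpi : (2 * π : ℂ) ≠ 0 := by exact_mod_cast Real.two_pi_pos.ne'
  rw [latticeFourierInv, intervalIntegral.integral_smul_const, integral_exp_I_mul_intCast]
  split_ifs
  · exact inv_smul_smul₀ hpi c
  · simp

lemma latticeFourierInv_exp_smul (f : ℝ → E) (d x : ℤ) :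
    latticeFourierInv (fun k => Complex.exp (-(Complex.I * k * d)) • f k) x =
      latticeFourierInv f (x - d) := by
  simp only [latticeFourierInv, smul_smul, ← Complex.exp_add]
  congr! 5
  push_cast
  ring_nf

lemma intervalIntegrable_exp_smul {f : ℝ → E} {a b : ℝ}
    (hf : IntervalIntegrable f volume a b) (x : ℤ) :
    IntervalIntegrable (fun k : ℝ => Complex.exp (Complex.I * k * x) • f k) volume a b :=
  hf.continuousOn_smul (by fun_prop)

lemma latticeFourierInv_finsetSum {ι : Type*} (s : Finset ι) {f : ι → ℝ → E}
    (hf : ∀ i ∈ s, IntervalIntegrable (f i) volume (-π) π) (x : ℤ) :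
    latticeFourierInv (fun k => ∑ i ∈ s, f i k) x = ∑ i ∈ s, latticeFourierInv (f i) x := by
  simp only [latticeFourierInv, Finset.smul_sum]
  rw [intervalIntegral.integral_finsetSum fun i hi => intervalIntegrable_exp_smul (hf i hi) x,
    Finset.smul_sum]

lemma latticeFourierInv_clm_comp [CompleteSpace E] [CompleteSpace F] (L : E →L[ℂ] F) {f : ℝ → E}
    (hf : IntervalIntegrable f volume (-π) π) (x : ℤ) :
    latticeFourierInv (fun k => L (f k)) x = L (latticeFourierInv f x) := by
  simp only [latticeFourierInv, ← map_smul]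
  rw [L.intervalIntegral_comp_comm (intervalIntegrable_exp_smul hf x), map_smul]

lemma latticeFourierInv_mulVec {m n : Type*} [Fintype m] [Fintype n] (A : Matrix m n ℂ)
    {f : ℝ → n → ℂ} (hf : IntervalIntegrable f volume (-π) π) (x : ℤ) :
    latticeFourierInv (fun k => A *ᵥ f k) x = A *ᵥ latticeFourierInv f x :=
  latticeFourierInv_clm_comp A.mulVecLin.toContinuousLinearMap hf x

lemma latticeFourierInv_apply {n : Type*} [Fintype n] {f : ℝ → n → ℂ}
    (hf : IntervalIntegrable f volume (-π) π) (x : ℤ) (i : n) :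
    latticeFourierInv f x i = latticeFourierInv (fun k => f k i) x :=
  (latticeFourierInv_clm_comp (ContinuousLinearMap.proj i) hf x).symm

end InverseFourier

section TranslationInvariantWalk

variable {ι n : Type*} [Fintype ι]

/-- The symbol `k ↦ ∑ᵢ e^{-ik dᵢ} Aᵢ` of the translation-invariant walk
`Ψ_{t+1}(x) = ∑ᵢ Aᵢ Ψ_t(x - dᵢ)`, i.e. the matrix by which one step acts on the Fourier side. -/
def walkSymbol (d : ι → ℤ) (A : ι → Matrix n n ℂ) (k : ℝ) : Matrix n n ℂ :=
  ∑ i, Complex.exp (-(Complex.I * k * d i)) • A i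

@[fun_prop]
lemma continuous_walkSymbol (d : ι → ℤ) (A : ι → Matrix n n ℂ) : Continuous (walkSymbol d A) := by
  unfold walkSymbol
  fun_prop

variable [Fintype n]

lemma latticeFourierInv_walkSymbol_mulVec (d : ι → ℤ) (A : ι → Matrix n n ℂ) {f : ℝ → n → ℂ}
    (hf : IntervalIntegrable f volume (-π) π) (x : ℤ) :
    latticeFourierInv (fun k => walkSymbol d A k *ᵥ f k) x =
      ∑ i, A i *ᵥ latticeFourierInv f (x - d i) := by
  have hterm (i : ι) : IntervalIntegrable
      (fun k : ℝ => Complex.exp (-(Complex.I * k * d i)) • (A i *ᵥ f k)) volume (-π) π :=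
    have hA : IntervalIntegrable (fun k => A i *ᵥ f k) volume (-π) π :=
      ⟨(A i).mulVecLin.toContinuousLinearMap.integrable_comp hf.1,
        (A i).mulVecLin.toContinuousLinearMap.integrable_comp hf.2⟩
    hA.continuousOn_smul (by fun_prop)
  simp only [walkSymbol, sum_mulVec, smul_mulVec]
  rw [latticeFourierInv_finsetSum _ fun i _ => hterm i]
  simp only [latticeFourierInv_exp_smul, latticeFourierInv_mulVec _ hf]

variable [DecidableEq n]

theorem eq_latticeFourierInv_walkSymbol_pow {d : ι → ℤ} {A : ι → Matrix n n ℂ}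
    {Ψ : ℕ → ℤ → n → ℂ} {v : n → ℂ} (h_zero : ∀ x, Ψ 0 x = if x = 0 then v else 0)
    (h_succ : ∀ t x, Ψ (t + 1) x = ∑ i, A i *ᵥ Ψ t (x - d i)) (t : ℕ) (x : ℤ) :
    Ψ t x = latticeFourierInv (fun k => walkSymbol d A k ^ t *ᵥ v) x := by
  induction t generalizing x with
  | zero => simp only [h_zero, pow_zero, one_mulVec, latticeFourierInv_const]
  | succ t ih =>
    have hcont : Continuous fun k => walkSymbol d A k ^ t *ᵥ v := by fun_prop
    simp only [pow_succ', ← mulVec_mulVec]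
    rw [latticeFourierInv_walkSymbol_mulVec d A (hcont.intervalIntegrable _ _), h_succ]
    simp only [ih]

end TranslationInvariantWalk

@[fun_prop]
lemma continuous_Rmat : Continuous Rmat := by
  unfold Rmat
  fun_prop

lemma norm_Rmat_mulVec_apply (φ : ℝ) (v : Fin 2 → ℂ) (i : Fin 2) :
    ‖(Rmat φ *ᵥ v) i‖ = ‖v i‖ := by
  have hexp := Complex.norm_exp_I_mul_ofReal φ
  fin_cases i <;> simp [Rmat, mulVec, dotProduct, hexp, Complex.exp_neg]

lemma exp_I_mul_eq_sq (θ : ℝ) :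
    Complex.exp (Complex.I * θ) = Complex.exp (-(Complex.I * (-θ / 2 : ℝ))) ^ 2 := by
  rw [← Complex.exp_nat_mul]
  push_cast
  ring_nf

lemma exp_neg_I_mul_eq_sq (θ : ℝ) :
    Complex.exp (-(Complex.I * θ)) = Complex.exp (Complex.I * (-θ / 2 : ℝ)) ^ 2 := by
  rw [← Complex.exp_nat_mul]
  push_cast
  ring_nf

lemma conj_az (ρ ν : ℝ) : (starRingEnd ℂ) (az ρ ν) = ρ * Complex.exp (-(Complex.I * ν)) := by
  simp [az, ← Complex.exp_conj]

lemma cwalk_succ (ρ ν : ℝ) (α β : ℂ) (t : ℕ) (x : ℤ) :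
    cwalk ρ ν α β (t + 1) x =
      ∑ i, ![Cm ρ ν, C0 ρ ν, Cp ρ ν] i *ᵥ cwalk ρ ν α β t (x - ![-1, 0, 1] i) := by
  rw [cwalk, Fin.sum_univ_three]
  simp

lemma walkSymbol_cwalk (ρ ν k : ℝ) :
    walkSymbol ![-1, 0, 1] ![Cm ρ ν, C0 ρ ν, Cp ρ ν] k =
      !![(rz ρ : ℂ) ^ 2 * Complex.exp (-(Complex.I * k)) - (ρ : ℂ) ^ 2,
          -(az ρ ν * rz ρ * (1 + Complex.exp (-(Complex.I * k))));
        rz ρ * (starRingEnd ℂ) (az ρ ν) * (1 + Complex.exp (Complex.I * k)),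
          (rz ρ : ℂ) ^ 2 * Complex.exp (Complex.I * k) - (ρ : ℂ) ^ 2] := by
  have hsum : walkSymbol ![-1, 0, 1] ![Cm ρ ν, C0 ρ ν, Cp ρ ν] k =
      Complex.exp (Complex.I * k) • Cm ρ ν + C0 ρ ν + Complex.exp (-(Complex.I * k)) • Cp ρ ν := by
    simp [walkSymbol, Fin.sum_univ_three]
  rw [hsum]
  ext i j
  fin_cases i <;> fin_cases j <;> simp [Cm, C0, Cp] <;> ring

lemma Rmat_mul_Cmat_sq (ρ k : ℝ) :
    (Rmat (-k / 2) * Cmat ρ) ^ 2 =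
      !![(rz ρ : ℂ) ^ 2 * Complex.exp (-(Complex.I * k)) - (ρ : ℂ) ^ 2,
          -(ρ * rz ρ * (1 + Complex.exp (-(Complex.I * k))));
        ρ * rz ρ * (1 + Complex.exp (Complex.I * k)),
          (rz ρ : ℂ) ^ 2 * Complex.exp (Complex.I * k) - (ρ : ℂ) ^ 2] := by
  rw [exp_I_mul_eq_sq, exp_neg_I_mul_eq_sq, Rmat, Cmat, Complex.exp_neg]
  ext i j
  fin_cases i <;> fin_cases j <;> simp [pow_two] <;> field_simp <;> ring

lemma semiconjBy_Rmat_walkSymbol (ρ ν k : ℝ) :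
    SemiconjBy (Rmat (-ν / 2)) (walkSymbol ![-1, 0, 1] ![Cm ρ ν, C0 ρ ν, Cp ρ ν] k)
      ((Rmat (-k / 2) * Cmat ρ) ^ 2) := by
  rw [SemiconjBy, walkSymbol_cwalk, Rmat_mul_Cmat_sq, conj_az, az, exp_I_mul_eq_sq ν,
    exp_neg_I_mul_eq_sq ν, Rmat, Complex.exp_neg (Complex.I * (-ν / 2 : ℝ))]
  ext i j
  fin_cases i <;> fin_cases j <;> simp <;> field_simp

theorem Rmat_mulVec_cwalk (ρ ν : ℝ) (α β : ℂ) (t : ℕ) (x : ℤ) :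
    Rmat (-ν / 2) *ᵥ cwalk ρ ν α β t x =
      latticeFourierInv (fun k =>
        (Rmat (-k / 2) * Cmat ρ) ^ (2 * t) *ᵥ Rmat (-ν / 2) *ᵥ ![α, β]) x := by
  have hpow (k : ℝ) := ((semiconjBy_Rmat_walkSymbol ρ ν k).pow_right t).eq
  have hcont : Continuous fun k =>
      walkSymbol ![-1, 0, 1] ![Cm ρ ν, C0 ρ ν, Cp ρ ν] k ^ t *ᵥ ![α, β] := by fun_prop
  rw [eq_latticeFourierInv_walkSymbol_pow (fun _ => rfl) (cwalk_succ ρ ν α β),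
    ← latticeFourierInv_mulVec _ (hcont.intervalIntegrable _ _)]
  simp only [mulVec_mulVec, pow_mul, hpow]

theorem stmt18_general (ρ ν : ℝ) (α β : ℂ) (t : ℕ) (x : ℤ) (i : Fin 2) :
    (Rmat (-ν / 2) *ᵥ cwalk ρ ν α β t x) i =
      ∫ k in (-π)..π,
        Complex.exp (Complex.I * (k : ℂ) * (x : ℂ)) *
          (((Rmat (-k / 2) * Cmat ρ) ^ (2 * t)).mulVec
            ((Rmat (-ν / 2)).mulVec ![α, β]) i) / (((2 * π : ℝ) : ℂ)) := by
  have hcont : Continuous fun k : ℝ =>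
      (Rmat (-k / 2) * Cmat ρ) ^ (2 * t) *ᵥ Rmat (-ν / 2) *ᵥ ![α, β] := by fun_prop
  rw [Rmat_mulVec_cwalk, latticeFourierInv_apply (hcont.intervalIntegrable _ _),
    latticeFourierInv, intervalIntegral.integral_div, smul_eq_mul, inv_mul_eq_div]
  simp only [smul_eq_mul, Complex.ofReal_mul, Complex.ofReal_ofNat]

/-- Fourier representation of the position distribution for the walk driven
by `V` alone. -/
theorem stmt18 (ρ ν : ℝ) (hρ : ρ ∈ Set.Ioo (0 : ℝ) 1)
    (α β : ℂ) (hαβ : norm α ^ 2 + norm β ^ 2 = 1) (t : ℕ) (x : ℤ) :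
    cprob ρ ν α β t x =
      norm (∫ k in (-π)..π,
          Complex.exp (Complex.I * (k : ℂ) * (x : ℂ)) *
            (((Rmat (-k / 2) * Cmat ρ) ^ (2 * t)).mulVec
              ((Rmat (-ν / 2)).mulVec ![α, β]) 0) / (((2 * π : ℝ) : ℂ))) ^ 2
      + norm (∫ k in (-π)..π,
          Complex.exp (Complex.I * (k : ℂ) * (x : ℂ)) *
            (((Rmat (-k / 2) * Cmat ρ) ^ (2 * t)).mulVec
              ((Rmat (-ν / 2)).mulVec ![α, β]) 1) / (((2 * π : ℝ) : ℂ))) ^ 2 := by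
  simp only [cprob, ← stmt18_general, norm_Rmat_mulVec_apply]

end
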